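/- Let n ≥ 4 be an integer, let τ, C > 0, and let v : ℝ × [τ,∞) → ℝ satisfy |v(x,t) − v_∞(x,t)| ≤ C t^{−4γ} for all x ∈ ℝ and t ≥ τ. Define the reaction front F(x,t) = (1/2)(v(x,t)² − u(x,t)²)^n. Then for every y ≠ 0, lim_{t→∞} t^{nε} F(√t y, t) = (1/2)(2 μ₁(|y|) μ₂(|y|))^n. -/

import Mathlib

noncomputable def kap : ℝ := 1 / Real.sqrt Real.pi

noncomputable def kap3 : ℝ := -kap / 12

noncomputable def gam (n : ℕ) : ℝ := 1 / (2 * (n : ℝ) + 1)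

noncomputable def eps (n : ℕ) : ℝ := 1 / ((n : ℝ) - 1)

noncomputable def alph (n : ℕ) : ℝ := 1 / 2 - gam n

noncomputable def del (n : ℕ) : ℝ := ((n : ℝ) + 2) / ((n : ℝ) - 1)

noncomputable def lam (n : ℕ) : ℝ :=
  (del n * (del n + 1) / (2 * kap) ^ n) ^ (1 / ((n : ℝ) - 1))

noncomputable def lam0 (n : ℕ) : ℝ :=
  (lam n / (2 * kap)) *
    (-2 * (n : ℝ) * kap3 * del n * (del n + 1) - kap * (del n - 2 * eps n)) /
    (((n : ℝ) - 1) * del n * (del n + 1) + 2 * (2 * del n - 1))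

def IsReactiveProfile (n : ℕ) (η : ℝ → ℝ) : Prop :=
  ContDiffOn ℝ 2 η (Set.Ici 0) ∧
  (∀ z ∈ Set.Ici (0:ℝ), 0 < η z) ∧
  (∀ z ∈ Set.Ici (0:ℝ),
    derivWithin (derivWithin η (Set.Ici 0)) (Set.Ici 0) z
      = (2 * kap * z * η z + (η z) ^ 2) ^ n) ∧
  derivWithin η (Set.Ici 0) 0 = -kap ∧
  Filter.Tendsto η Filter.atTop (nhds 0)

/-- The corrector h: C² on [0,∞), satisfies
h'' + γη + αzη' = n(2κzη+η²)^{n−1}((2κz+2η)h + 2κ₃z³η), h'(0) = 0,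
h(z) − λ₀ z^{2−δ} → 0 as z → ∞. -/
def IsCorrector (n : ℕ) (η h : ℝ → ℝ) : Prop :=
  ContDiffOn ℝ 2 h (Set.Ici 0) ∧
  (∀ z ∈ Set.Ici (0:ℝ),
    derivWithin (derivWithin h (Set.Ici 0)) (Set.Ici 0) z + gam n * η z
        + alph n * z * derivWithin η (Set.Ici 0) z
      = (n : ℝ) * (2 * kap * z * η z + (η z) ^ 2) ^ (n - 1)
          * ((2 * kap * z + 2 * η z) * h z + 2 * kap3 * z ^ 3 * η z)) ∧
  derivWithin h (Set.Ici 0) 0 = 0 ∧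
  Filter.Tendsto (fun z : ℝ => h z - lam0 n * z ^ (2 - del n)) Filter.atTop (nhds 0)

noncomputable def mu1 (y : ℝ) : ℝ :=
  (2 / Real.sqrt Real.pi) * ∫ σ in (0:ℝ)..(y / 2), Real.exp (-σ ^ 2)

def IsDiffusiveProfile (n : ℕ) (μ : ℝ → ℝ) : Prop :=
  ContDiffOn ℝ 2 μ (Set.Ioi 0) ∧
  (∀ y ∈ Set.Ioi (0:ℝ), 0 < μ y) ∧
  (∀ y ∈ Set.Ioi (0:ℝ),
    deriv (deriv μ) y + y / 2 * deriv μ y + eps n * μ y = (2 * mu1 y * μ y) ^ n) ∧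
  Filter.Tendsto (fun y : ℝ => y ^ del n * μ y) (nhdsWithin 0 (Set.Ioi 0)) (nhds (lam n)) ∧
  Filter.Tendsto (fun y : ℝ => y ^ (2 * eps n) * μ y) Filter.atTop (nhds 0)

/-- u(x,t) = −erf(x/(2√t)). -/
noncomputable def uu (x t : ℝ) : ℝ := -mu1 (x / Real.sqrt t)

/-- ū(x,t) = μ₁(|x|/√t). -/
noncomputable def ubar (x t : ℝ) : ℝ := mu1 (|x| / Real.sqrt t)

/-- φ₁(z) = η(z) − λ z^{−δ}. -/
noncomputable def phi1 (n : ℕ) (η : ℝ → ℝ) (z : ℝ) : ℝ := η z - lam n * z ^ (-(del n))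

/-- φ₂(z) = −λ₀ z^{2−δ} + h(z). -/
noncomputable def phi2 (n : ℕ) (h : ℝ → ℝ) (z : ℝ) : ℝ := -lam0 n * z ^ (2 - del n) + h z

/-- μ₃(y) = μ₂(y) − λ y^{−δ}. -/
noncomputable def mu3 (n : ℕ) (μ : ℝ → ℝ) (y : ℝ) : ℝ := μ y - lam n * y ^ (-(del n))

/-- The asymptotic profile v_∞. -/
noncomputable def vInf (n : ℕ) (η μ h : ℝ → ℝ) (x t : ℝ) : ℝ :=
  mu1 (|x| / Real.sqrt t) + t ^ (-(eps n)) * μ (|x| / Real.sqrt t)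
    + t ^ (-(gam n)) * phi1 n η (|x| / t ^ alph n)
    + t ^ (-(3 * gam n)) * phi2 n h (|x| / t ^ alph n)

/-- φ(x,t) = t^{−γ} η(|z|) + t^{−ε} μ₃(|y|) + t^{−3γ} φ₂(|z|). -/
noncomputable def phiFun (n : ℕ) (η μ h : ℝ → ℝ) (x t : ℝ) : ℝ :=
  t ^ (-(gam n)) * η (|x| / t ^ alph n) + t ^ (-(eps n)) * mu3 n μ (|x| / Real.sqrt t)
    + t ^ (-(3 * gam n)) * phi2 n h (|x| / t ^ alph n)

/-!
On the ray `x = √t y` the factor `v² - u² = (v - μ₁) (v + μ₁)` is governed by the first correction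
to `μ₁`, so the limit amounts to the expansion `v = μ₁ + t^(-ε) μ₂ + o(t^(-ε))` at fixed `y`. The
two inner terms of `v_∞` are evaluated at `z = |y| t^γ → ∞`. Since `ε ≤ 3γ`, decay of `φ₂` is
enough to make its term negligible; since `ε = γ + γδ`, the term with `φ₁` is negligible exactly
when `η(z) = λ z^(-δ) + o(z^(-δ))`.

This last fact is a comparison argument. The right-hand side of the profile equation increases with
`η`, so ordered sub- and supersolutions that vanish at infinity stay ordered. For large `z` the term
`η²` is dominated by `2κzη`, and `A (z + b)^(-δ)` is a sub- or supersolution according to whether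
`(2κA)ⁿ` is below or above `δ(δ+1)A`; equality holds at `A = λ`.
-/

open Filter Topology Set Asymptotics

section ComparisonPrinciple

theorem not_isLocalMax_of_deriv_deriv_pos {f : ℝ → ℝ} {x : ℝ} (hc : ContinuousAt f x)
    (hf : 0 < deriv (deriv f) x) : ¬IsLocalMax f x := by
  intro hmax
  have hmin : IsLocalMin f x := isLocalMin_of_deriv_deriv_pos hf hmax.deriv_eq_zero hc
  have hconst : f =ᶠ[𝓝 x] fun _ => f x := by
    filter_upwards [hmax, hmin] with z using le_antisymm
  have hzero : deriv (deriv f) x = 0 := by simpa using hconst.deriv.deriv_eq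
  exact hf.ne' hzero

theorem nonpos_of_deriv_deriv_pos {f : ℝ → ℝ} {a : ℝ} (hc : ∀ z ≥ a, ContinuousAt f z)
    (ha : f a ≤ 0) (hlim : Tendsto f atTop (𝓝 0))
    (hconv : ∀ z > a, 0 < f z → 0 < deriv (deriv f) z) : ∀ z ≥ a, f z ≤ 0 := by
  by_contra! ⟨x, hax, hx⟩
  have hfar : ∀ᶠ z in cocompact ℝ ⊓ 𝓟 (Ici a), f z ≤ f x := by
    rw [cocompact_eq_atBot_atTop, eventually_inf_principal, eventually_sup]
    exact ⟨(eventually_lt_atBot a).mono fun z hz haz => absurd haz hz.not_ge,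
      (hlim.eventually_le_const hx).mono fun z hz _ => hz⟩
  obtain ⟨m, ham, hmax⟩ := ContinuousOn.exists_isMaxOn'
    (fun z hz => (hc z hz).continuousWithinAt) isClosed_Ici hax hfar
  have hm : 0 < f m := hx.trans_le (hmax hax)
  have ham' : a < m := lt_of_le_of_ne ham fun h => (h ▸ ha).not_gt hm
  exact not_isLocalMax_of_deriv_deriv_pos (hc m ham) (hconv m ham' hm)
    (hmax.isLocalMax (Ici_mem_nhds ham'))

theorem le_of_subsolution_of_supersolution {F : ℝ → ℝ → ℝ} {s : Set ℝ} {f g : ℝ → ℝ} {a : ℝ}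
    (hF : ∀ z > a, StrictMonoOn (F z) s)
    (hf : ∀ z ≥ a, ContDiffAt ℝ 2 f z) (hg : ∀ z ≥ a, ContDiffAt ℝ 2 g z)
    (hfs : ∀ z > a, f z ∈ s) (hgs : ∀ z > a, g z ∈ s)
    (hsub : ∀ z > a, F z (f z) ≤ deriv (deriv f) z)
    (hsuper : ∀ z > a, deriv (deriv g) z ≤ F z (g z))
    (ha : f a ≤ g a) (hlim : Tendsto (f - g) atTop (𝓝 0)) : ∀ z ≥ a, f z ≤ g z := by
  suffices ∀ z ≥ a, (f - g) z ≤ 0 from fun z hz => sub_nonpos.mp (this z hz)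
  refine nonpos_of_deriv_deriv_pos
    (fun z hz => (hf z hz).continuousAt.sub (hg z hz).continuousAt) (sub_nonpos.mpr ha) hlim
    fun z hz hpos => ?_
  have hderiv : deriv (deriv (f - g)) z = deriv (deriv f) z - deriv (deriv g) z := by
    simpa only [iteratedDeriv_succ, iteratedDeriv_zero] using
      iteratedDeriv_sub (hf z hz.le) (hg z hz.le)
  have hlt : F z (g z) < F z (f z) := hF z hz (hgs z hz) (hfs z hz) (sub_pos.mp hpos)
  linarith [hsub z hz, hsuper z hz]

end ComparisonPrinciple

section RpowAsymptotics

variable {p q : ℝ}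

theorem isLittleO_rpow_atTop_iff {f : ℝ → ℝ} :
    f =o[atTop] (fun t => t ^ q) ↔ Tendsto (fun t => t ^ (-q) * f t) atTop (𝓝 0) := by
  have hpos : ∀ᶠ t : ℝ in atTop, 0 < t ^ q := by
    filter_upwards [eventually_gt_atTop 0] with t ht using by positivity
  rw [isLittleO_iff_tendsto' (hpos.mono fun t ht h => absurd h ht.ne')]
  refine tendsto_congr' ?_
  filter_upwards [eventually_ge_atTop 0] with t ht
  rw [Real.rpow_neg ht, div_eq_inv_mul]

theorem isLittleO_rpow_rpow_atTop (hpq : p < q) :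
    (fun t : ℝ => t ^ p) =o[atTop] fun t => t ^ q := by
  refine isLittleO_rpow_atTop_iff.mpr ((tendsto_rpow_neg_atTop (sub_pos.mpr hpq)).congr' ?_)
  filter_upwards [eventually_gt_atTop 0] with t ht
  rw [← Real.rpow_add ht, neg_sub, neg_add_eq_sub]

theorem isBigO_rpow_rpow_atTop (hpq : p ≤ q) :
    (fun t : ℝ => t ^ p) =O[atTop] fun t => t ^ q := by
  rcases hpq.eq_or_lt with rfl | hlt
  · exact isBigO_refl _ _
  · exact (isLittleO_rpow_rpow_atTop hlt).isBigO

theorem tendsto_rpow_mul_sq_sub_sq_pow {f : ℝ → ℝ} {m k : ℝ} (hp : 0 < p)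
    (hf : (fun t => f t - (m + t ^ (-p) * k)) =o[atTop] fun t => t ^ (-p)) (n : ℕ) :
    Tendsto (fun t => t ^ (n * p) * (f t ^ 2 - m ^ 2) ^ n) atTop (𝓝 ((2 * m * k) ^ n)) := by
  have hcancel : ∀ᶠ t : ℝ in atTop, t ^ p * t ^ (-p) = 1 := by
    filter_upwards [eventually_gt_atTop 0] with t ht
    rw [← Real.rpow_add ht, add_neg_cancel, Real.rpow_zero]
  have hdiff : Tendsto (fun t => t ^ p * (f t - m)) atTop (𝓝 k) := by
    have hrem := (isLittleO_rpow_atTop_iff.mp hf).add_const k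
    rw [zero_add, neg_neg] at hrem
    refine hrem.congr' (hcancel.mono fun t ht => ?_)
    linear_combination (-k) * ht
  have hsum : Tendsto (fun t => f t + m) atTop (𝓝 (2 * m)) := by
    have hzero := ((tendsto_rpow_neg_atTop hp).mul hdiff).add_const (2 * m)
    rw [zero_mul, zero_add] at hzero
    refine hzero.congr' (hcancel.mono fun t ht => ?_)
    linear_combination (f t - m) * ht
  refine ((hsum.mul hdiff).pow n).congr' ?_
  filter_upwards [eventually_ge_atTop 0] with t ht
  rw [mul_comm (n : ℝ), Real.rpow_mul_natCast ht, ← mul_pow]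
  ring

end RpowAsymptotics

section PowerBarrier

/-- The function `A (z + b)^(-d)`, which serves as a sub- or supersolution of the reactive profile
equation; the shift `b` is free so that its value at one chosen point can be prescribed. -/
noncomputable def powerBarrier (d A b z : ℝ) : ℝ := A * (z + b) ^ (-d)

variable {d A b z : ℝ}

theorem powerBarrier_pos (hA : 0 < A) (hz : 0 < z + b) : 0 < powerBarrier d A b z := by
  unfold powerBarrier
  positivity

theorem contDiffAt_powerBarrier (hz : 0 < z + b) : ContDiffAt ℝ 2 (powerBarrier d A b) z :=
  contDiffAt_const.mul ((contDiffAt_id.add contDiffAt_const).rpow_const_of_ne hz.ne')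

theorem deriv_deriv_powerBarrier (d A b z : ℝ) :
    deriv (deriv (powerBarrier d A b)) z = d * (d + 1) * A * (z + b) ^ (-d - 2) := by
  have hderiv (r e : ℝ) :
      deriv (fun x => r * (x + b) ^ e) = fun x => r * e * (x + b) ^ (e - 1) := by
    funext x
    rw [deriv_const_mul_field, deriv_comp_add_const (fun x : ℝ => x ^ e), Real.deriv_rpow_const,
      mul_assoc]
  change deriv (deriv fun x => A * (x + b) ^ (-d)) z = _
  rw [hderiv, hderiv, sub_sub, one_add_one_eq_two]
  ring

theorem tendsto_powerBarrier (hd : 0 < d) (A b : ℝ) :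
    Tendsto (powerBarrier d A b) atTop (𝓝 0) := by
  have hshift : Tendsto (fun z : ℝ => z + b) atTop atTop :=
    tendsto_atTop_add_const_right atTop b tendsto_id
  rw [← mul_zero A]
  exact ((tendsto_rpow_neg_atTop hd).comp hshift).const_mul A

theorem tendsto_rpow_mul_powerBarrier (d A b : ℝ) :
    Tendsto (fun z => z ^ d * powerBarrier d A b z) atTop (𝓝 A) := by
  have hratio : Tendsto (fun z : ℝ => 1 - b * (z + b)⁻¹) atTop (𝓝 1) := by
    simpa using ((tendsto_inv_atTop_zero.comp
      (tendsto_atTop_add_const_right atTop b tendsto_id)).const_mul b).const_sub 1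
  have hpow : Tendsto (fun z : ℝ => A * (1 - b * (z + b)⁻¹) ^ d) atTop (𝓝 A) := by
    simpa using (hratio.rpow_const (p := d) (Or.inl one_ne_zero)).const_mul A
  refine hpow.congr' ?_
  filter_upwards [eventually_gt_atTop 0, eventually_gt_atTop (-b)] with z hz hzb
  have hzb : 0 < z + b := by linarith
  rw [show 1 - b * (z + b)⁻¹ = z / (z + b) by field_simp; ring, Real.div_rpow hz.le hzb.le,
    powerBarrier, Real.rpow_neg hzb.le]
  ring

end PowerBarrier

section ReactiveProfile

/-- The right-hand side of the reactive profile equation `w'' = (c z w + w²)ⁿ`; the equation for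
`η` has `c = 2κ`. -/
def reactionRate (n : ℕ) (c z w : ℝ) : ℝ := (c * z * w + w ^ 2) ^ n

/-- A positive solution of the reactive profile equation near infinity that tends to zero there.
No boundary condition at `a` is imposed: the leading order at infinity does not depend on one. -/
structure IsDecayingSolution (n : ℕ) (c a : ℝ) (w : ℝ → ℝ) : Prop where
  contDiffAt : ∀ z > a, ContDiffAt ℝ 2 w z
  pos : ∀ z > a, 0 < w z
  deriv_deriv : ∀ z > a, deriv (deriv w) z = reactionRate n c z (w z)
  tendsto : Tendsto w atTop (𝓝 0)

variable {n : ℕ} {c a A b z : ℝ} {w η : ℝ → ℝ}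

theorem strictMonoOn_reactionRate (hn : n ≠ 0) (hc : 0 ≤ c) (hz : 0 ≤ z) :
    StrictMonoOn (reactionRate n c z) (Ioi 0) := by
  intro u (hu : 0 < u) v _ huv
  have hbase : c * z * u + u ^ 2 < c * z * v + v ^ 2 :=
    add_lt_add_of_le_of_lt (by gcongr) (by gcongr)
  exact pow_lt_pow_left₀ hbase (by positivity) hn

theorem del_pos (hn : 2 ≤ n) : 0 < del n := by
  have : (2 : ℝ) ≤ n := mod_cast hn
  exact div_pos (by linarith) (by linarith)

theorem mul_rpow_neg_del_pow (hn : 2 ≤ n) {x : ℝ} (hx : 0 < x) :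
    (x * x ^ (-del n)) ^ n = x ^ (-del n - 2) := by
  have hn' : (n : ℝ) - 1 ≠ 0 := by
    have : (2 : ℝ) ≤ n := mod_cast hn
    linarith
  have hexp : (1 + -del n) * n = -del n - 2 := by
    unfold del
    field_simp
    ring
  nth_rw 1 [← Real.rpow_one x]
  rw [← Real.rpow_add hx, ← Real.rpow_mul_natCast hx.le, hexp]

theorem powerBarrier_supersolution (hn : 2 ≤ n) (hc : 0 ≤ c) (hA : 0 < A)
    (hcA : del n * (del n + 1) * A ≤ (c * A) ^ n) (hb : b ≤ 0) (hz : 0 < z + b) :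
    deriv (deriv (powerBarrier (del n) A b)) z
      ≤ reactionRate n c z (powerBarrier (del n) A b z) := by
  have hw : 0 < powerBarrier (del n) A b z := powerBarrier_pos hA hz
  calc
    _ = del n * (del n + 1) * A * ((z + b) * (z + b) ^ (-del n)) ^ n := by
      rw [deriv_deriv_powerBarrier, mul_rpow_neg_del_pow hn hz]
    _ ≤ (c * A) ^ n * ((z + b) * (z + b) ^ (-del n)) ^ n := by gcongr
    _ = (c * (z + b) * powerBarrier (del n) A b z) ^ n := by
      rw [← mul_pow, powerBarrier]
      ring
    _ ≤ (c * z * powerBarrier (del n) A b z) ^ n := by gcongr; linarith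
    _ ≤ reactionRate n c z (powerBarrier (del n) A b z) := by
      have : 0 < z := by linarith
      unfold reactionRate
      gcongr
      exact le_add_of_nonneg_right (sq_nonneg _)

theorem powerBarrier_subsolution (hn : 2 ≤ n) (hc : 0 ≤ c) (hA : 0 < A) {s : ℝ}
    (hs : 0 ≤ s) (hcA : ((c + s) * A) ^ n ≤ del n * (del n + 1) * A) (hb : 0 ≤ b) (hz : 0 < z)
    (hsz : powerBarrier (del n) A b z ≤ s * z) :
    reactionRate n c z (powerBarrier (del n) A b z)
      ≤ deriv (deriv (powerBarrier (del n) A b)) z := by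
  have hzb : 0 < z + b := by linarith
  have hw : 0 < powerBarrier (del n) A b z := powerBarrier_pos hA hzb
  calc
    reactionRate n c z (powerBarrier (del n) A b z)
      = ((c * z + powerBarrier (del n) A b z) * powerBarrier (del n) A b z) ^ n := by
      unfold reactionRate
      ring
    _ ≤ ((c + s) * (z + b) * powerBarrier (del n) A b z) ^ n := by
      gcongr
      nlinarith [mul_nonneg (add_nonneg hc hs) hb]
    _ = ((c + s) * A) ^ n * ((z + b) * (z + b) ^ (-del n)) ^ n := by
      rw [← mul_pow, powerBarrier]
      ring
    _ ≤ del n * (del n + 1) * A * ((z + b) * (z + b) ^ (-del n)) ^ n := by gcongr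
    _ = _ := by rw [deriv_deriv_powerBarrier, mul_rpow_neg_del_pow hn hzb]

theorem IsDecayingSolution.eventually_le_powerBarrier (hw : IsDecayingSolution n c a w)
    (hn : 2 ≤ n) (hc : 0 ≤ c) (hA : 0 < A) (hcA : del n * (del n + 1) * A ≤ (c * A) ^ n) :
    ∃ b, ∀ᶠ z in atTop, w z ≤ powerBarrier (del n) A b z := by
  have hd := del_pos hn
  obtain ⟨Z, haZ, hZ⟩ : ∃ Z, a < Z ∧ 0 < Z :=
    ((eventually_gt_atTop a).and (eventually_gt_atTop 0)).exists
  -- A barrier whose pole `Z - x` lies close enough to `Z` exceeds `w` at `Z`.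
  obtain ⟨x, hx, hx0, hxZ⟩ : ∃ x, w Z ≤ A * x ^ (-del n) ∧ 0 < x ∧ x < Z :=
    ((((tendsto_rpow_neg_nhdsGT_zero (neg_lt_zero.mpr hd)).const_mul_atTop hA).eventually_ge_atTop
      (w Z)).and (Ioo_mem_nhdsGT hZ)).exists
  have hzb : ∀ z ≥ Z, 0 < z + (x - Z) := fun z hz => by linarith
  have hle : ∀ z ≥ Z, w z ≤ powerBarrier (del n) A (x - Z) z :=
    le_of_subsolution_of_supersolution (s := Ioi 0)
      (fun z hz => strictMonoOn_reactionRate (by lia) hc (hZ.trans hz).le)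
      (fun z hz => hw.contDiffAt z (haZ.trans_le hz))
      (fun z hz => contDiffAt_powerBarrier (hzb z hz))
      (fun z hz => hw.pos z (haZ.trans hz))
      (fun z hz => powerBarrier_pos hA (hzb z hz.le))
      (fun z hz => (hw.deriv_deriv z (haZ.trans hz)).ge)
      (fun z hz => powerBarrier_supersolution hn hc hA hcA (by linarith) (hzb z hz.le))
      (by simpa [powerBarrier] using hx)
      (sub_zero (0 : ℝ) ▸ hw.tendsto.sub (tendsto_powerBarrier hd A (x - Z)))
  exact ⟨x - Z, (eventually_ge_atTop Z).mono hle⟩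

theorem IsDecayingSolution.powerBarrier_le (hw : IsDecayingSolution n c a w) (hn : 2 ≤ n)
    (hc : 0 ≤ c) (hA : 0 < A) {s Z : ℝ} (hs : 0 ≤ s)
    (hcA : ((c + s) * A) ^ n ≤ del n * (del n + 1) * A) (hb : 0 ≤ b) (haZ : a < Z) (hZ : 0 < Z)
    (hsZ : A * Z ^ (-del n) ≤ s * Z) (hbZ : powerBarrier (del n) A b Z ≤ w Z) :
    ∀ z ≥ Z, powerBarrier (del n) A b z ≤ w z := by
  have hd := del_pos hn
  have hzb : ∀ z ≥ Z, 0 < z + b := fun z hz => by linarith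
  have hsz : ∀ z > Z, powerBarrier (del n) A b z ≤ s * z := fun z hz => calc
    A * (z + b) ^ (-del n) ≤ A * Z ^ (-del n) :=
      mul_le_mul_of_nonneg_left
        (Real.rpow_le_rpow_of_nonpos hZ (by linarith) (by linarith)) hA.le
    _ ≤ s * Z := hsZ
    _ ≤ s * z := by gcongr
  exact le_of_subsolution_of_supersolution (s := Ioi 0)
    (fun z hz => strictMonoOn_reactionRate (by lia) hc (hZ.trans hz).le)
    (fun z hz => contDiffAt_powerBarrier (hzb z hz))
    (fun z hz => hw.contDiffAt z (haZ.trans_le hz))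
    (fun z hz => powerBarrier_pos hA (hzb z hz.le))
    (fun z hz => hw.pos z (haZ.trans hz))
    (fun z hz => powerBarrier_subsolution hn hc hA hs hcA hb (hZ.trans hz) (hsz z hz))
    (fun z hz => (hw.deriv_deriv z (haZ.trans hz)).le)
    hbZ
    (sub_zero (0 : ℝ) ▸ (tendsto_powerBarrier hd A b).sub hw.tendsto)

theorem IsDecayingSolution.eventually_powerBarrier_le (hw : IsDecayingSolution n c a w)
    (hn : 2 ≤ n) (hc : 0 ≤ c) (hA : 0 < A) (hcA : (c * A) ^ n < del n * (del n + 1) * A) :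
    ∃ b, ∀ᶠ z in atTop, powerBarrier (del n) A b z ≤ w z := by
  have hd := del_pos hn
  -- The strict inequality leaves room for a slope `s` that absorbs the quadratic term of the rate.
  obtain ⟨s, hsA, hs⟩ : ∃ s, ((c + s) * A) ^ n < del n * (del n + 1) * A ∧ 0 < s := by
    have hcont : ContinuousWithinAt (fun s => ((c + s) * A) ^ n) (Ioi 0) 0 :=
      Continuous.continuousWithinAt (by fun_prop)
    exact ((hcont.eventually_lt_const (by simpa using hcA)).and self_mem_nhdsWithin).exists
  obtain ⟨Z, hsZ, haZ, hZ⟩ : ∃ Z, A * Z ^ (-del n) ≤ s * Z ∧ a < Z ∧ 0 < Z := by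
    have hsmall := (tendsto_powerBarrier hd A 0).eventually_le_const hs
    obtain ⟨Z, hZs, hZa, hZ1⟩ :=
      (hsmall.and ((eventually_gt_atTop a).and (eventually_ge_atTop 1))).exists
    rw [powerBarrier, add_zero] at hZs
    exact ⟨Z, hZs.trans (le_mul_of_one_le_right hs.le hZ1), hZa, by linarith⟩
  obtain ⟨b, hb, hb0⟩ : ∃ b, A * (b + Z) ^ (-del n) < w Z ∧ 0 ≤ b :=
    (((tendsto_powerBarrier hd A Z).eventually_lt_const (hw.pos Z haZ)).and
      (eventually_ge_atTop 0)).exists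
  exact ⟨b, (eventually_ge_atTop Z).mono (hw.powerBarrier_le hn hc hA hs.le hsA.le hb0 haZ hZ hsZ
    (by simpa [powerBarrier, add_comm] using hb.le))⟩

theorem IsDecayingSolution.tendsto_rpow_del_mul (hw : IsDecayingSolution n c a w) (hn : 2 ≤ n)
    (hc : 0 ≤ c) {l : ℝ} (hl : 0 < l) (hcl : (c * l) ^ n = del n * (del n + 1) * l) :
    Tendsto (fun z => z ^ del n * w z) atTop (𝓝 l) := by
  refine tendsto_order.mpr ⟨fun l₁ hl₁ => ?_, fun l₂ hl₂ => ?_⟩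
  · obtain ⟨A, hA, hAl⟩ := exists_between (max_lt hl₁ hl)
    obtain ⟨hl₁A, hA⟩ := max_lt_iff.mp hA
    have hcA : (c * A) ^ n < del n * (del n + 1) * A := by
      have hd := del_pos hn
      have hcl_pos : 0 < (c * l) ^ n := hcl ▸ by positivity
      have hratio : (A / l) ^ n < A / l :=
        pow_lt_self_of_lt_one₀ (by positivity) ((div_lt_one hl).mpr hAl) (by lia)
      calc (c * A) ^ n = (c * l) ^ n * (A / l) ^ n := by rw [← mul_pow]; field_simp
        _ < (c * l) ^ n * (A / l) := by gcongr
        _ = del n * (del n + 1) * A := by rw [hcl]; field_simp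
    obtain ⟨b, hb⟩ := hw.eventually_powerBarrier_le hn hc hA hcA
    filter_upwards [hb, (tendsto_rpow_mul_powerBarrier (del n) A b).eventually_const_lt hl₁A,
      eventually_ge_atTop 0] with z hle hlt hz
    exact hlt.trans_le (by gcongr)
  · obtain ⟨b, hb⟩ := hw.eventually_le_powerBarrier hn hc hl hcl.ge
    filter_upwards [hb, (tendsto_rpow_mul_powerBarrier (del n) l b).eventually_lt_const hl₂,
      eventually_ge_atTop 0] with z hle hlt hz
    exact lt_of_le_of_lt (by gcongr) hlt

theorem kap_pos : 0 < kap := by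
  unfold kap
  positivity

theorem lam_pos (hn : 2 ≤ n) : 0 < lam n := by
  have := del_pos hn
  have := kap_pos
  unfold lam
  positivity

theorem two_mul_kap_mul_lam_pow (hn : 2 ≤ n) :
    (2 * kap * lam n) ^ n = del n * (del n + 1) * lam n := by
  have hd := del_pos hn
  have hk := kap_pos
  have hlam : lam n ^ (n - 1) = del n * (del n + 1) / (2 * kap) ^ n := by
    rw [lam, one_div, ← Nat.cast_pred (by lia)]
    exact Real.rpow_inv_natCast_pow (by positivity) (by lia)
  rw [mul_pow, ← pow_sub_one_mul (by lia) (lam n), hlam]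
  field_simp

theorem IsReactiveProfile.isDecayingSolution (hη : IsReactiveProfile n η) :
    IsDecayingSolution n (2 * kap) 0 η := by
  obtain ⟨hdiff, hpos, hode, -, hlim⟩ := hη
  refine ⟨fun z hz => hdiff.contDiffAt (Ici_mem_nhds hz), fun z hz => hpos z hz.le,
    fun z hz => ?_, hlim⟩
  have hderiv : derivWithin η (Ici 0) =ᶠ[𝓝 z] deriv η := by
    filter_upwards [Ioi_mem_nhds hz] with x hx using derivWithin_of_mem_nhds (Ici_mem_nhds hx)
  rw [reactionRate, ← hode z hz.le, derivWithin_of_mem_nhds (Ici_mem_nhds hz), hderiv.deriv_eq]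

theorem IsReactiveProfile.phi1_isLittleO (hη : IsReactiveProfile n η) (hn : 2 ≤ n) :
    phi1 n η =o[atTop] fun z => z ^ (-del n) := by
  have hlead := (hη.isDecayingSolution.tendsto_rpow_del_mul hn (by linarith [kap_pos])
    (lam_pos hn) (two_mul_kap_mul_lam_pow hn)).sub_const (lam n)
  rw [sub_self] at hlead
  refine isLittleO_rpow_atTop_iff.mpr (hlead.congr' ?_)
  filter_upwards [eventually_gt_atTop 0] with z hz
  have hcancel : z ^ del n * z ^ (-del n) = 1 := by
    rw [← Real.rpow_add hz, add_neg_cancel, Real.rpow_zero]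
  rw [neg_neg, phi1]
  linear_combination lam n * hcancel

end ReactiveProfile

section DiffusiveScale

variable {n : ℕ} {η μ h : ℝ → ℝ} {y : ℝ}

theorem mu1_odd : Function.Odd mu1 := by
  intro y
  have hneg := intervalIntegral.integral_comp_neg (a := 0) (b := y / 2)
    fun σ : ℝ => Real.exp (-σ ^ 2)
  simp only [neg_sq, neg_zero] at hneg
  rw [mu1, mu1, neg_div, hneg, intervalIntegral.integral_symm, mul_neg]

theorem uu_sqrt_mul_sq {t : ℝ} (ht : 0 < t) (y : ℝ) : uu (√t * y) t ^ 2 = mu1 |y| ^ 2 := by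
  have hs : √t ≠ 0 := (Real.sqrt_pos.mpr ht).ne'
  rw [uu, neg_sq, mul_div_cancel_left₀ _ hs]
  rcases abs_choice y with hy | hy <;> simp [hy, mu1_odd y]

theorem vInf_sqrt_mul {t : ℝ} (ht : 0 < t) (y : ℝ) :
    vInf n η μ h (√t * y) t = mu1 |y| + t ^ (-eps n) * μ |y|
      + t ^ (-gam n) * phi1 n η (|y| * t ^ gam n)
      + t ^ (-(3 * gam n)) * phi2 n h (|y| * t ^ gam n) := by
  have hs : 0 < √t := Real.sqrt_pos.mpr ht
  have habs : |√t * y| = √t * |y| := by rw [abs_mul, abs_of_pos hs]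
  have hinner : √t * |y| / t ^ alph n = |y| * t ^ gam n := by
    rw [Real.sqrt_eq_rpow, mul_comm, mul_div_assoc, ← Real.rpow_sub ht, alph, sub_sub_cancel]
  rw [vInf, habs, mul_div_cancel_left₀ _ hs.ne', hinner]

theorem gam_pos (n : ℕ) : 0 < gam n := by
  unfold gam
  positivity

theorem eps_pos (hn : 2 ≤ n) : 0 < eps n := by
  have : (2 : ℝ) ≤ n := mod_cast hn
  exact one_div_pos.mpr (by linarith)

theorem eps_le_three_mul_gam (hn : 4 ≤ n) : eps n ≤ 3 * gam n := by
  have : (4 : ℝ) ≤ n := mod_cast hn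
  rw [eps, gam, mul_one_div, div_le_div_iff₀ (by linarith) (by linarith)]
  linarith

theorem gam_mul_del_add_gam (hn : 2 ≤ n) : gam n * del n + gam n = eps n := by
  have : (2 : ℝ) ≤ n := mod_cast hn
  have : (n : ℝ) - 1 ≠ 0 := by linarith
  unfold eps gam del
  field_simp
  ring

theorem tendsto_mul_rpow_gam (hy : y ≠ 0) (n : ℕ) :
    Tendsto (fun t : ℝ => |y| * t ^ gam n) atTop atTop :=
  (tendsto_rpow_atTop (gam_pos n)).const_mul_atTop (abs_pos.mpr hy)

theorem IsReactiveProfile.rpow_mul_phi1_isLittleO (hη : IsReactiveProfile n η) (hn : 2 ≤ n)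
    (hy : y ≠ 0) :
    (fun t => t ^ (-gam n) * phi1 n η (|y| * t ^ gam n)) =o[atTop] fun t => t ^ (-eps n) := by
  have hcomp := (isBigO_refl (fun t : ℝ => t ^ (-gam n)) atTop).mul_isLittleO
    ((hη.phi1_isLittleO hn).comp_tendsto (tendsto_mul_rpow_gam hy n))
  refine (hcomp.congr' .rfl ?_).trans_isBigO
    (isBigO_const_mul_self (|y| ^ (-del n)) (fun t : ℝ => t ^ (-eps n)) atTop)
  filter_upwards [eventually_gt_atTop 0] with t ht
  rw [Function.comp_apply, Real.mul_rpow (abs_nonneg y) (by positivity), ← Real.rpow_mul ht.le,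
    mul_left_comm, ← Real.rpow_add ht, ← gam_mul_del_add_gam hn]
  ring_nf

theorem rpow_mul_phi2_isLittleO (hn : 4 ≤ n) (hy : y ≠ 0)
    (hh : Tendsto (fun z => h z - lam0 n * z ^ (2 - del n)) atTop (𝓝 0)) :
    (fun t => t ^ (-(3 * gam n)) * phi2 n h (|y| * t ^ gam n)) =o[atTop] fun t => t ^ (-eps n) := by
  have hphi2 : phi2 n h = fun z => h z - lam0 n * z ^ (2 - del n) := by
    funext z
    rw [phi2]
    ring
  have hzero : (fun t => phi2 n h (|y| * t ^ gam n)) =o[atTop] fun _ => (1 : ℝ) :=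
    (isLittleO_one_iff ℝ).mpr ((hphi2 ▸ hh).comp (tendsto_mul_rpow_gam hy n))
  simpa using (isBigO_rpow_rpow_atTop (neg_le_neg (eps_le_three_mul_gam hn))).mul_isLittleO hzero

theorem vInf_sqrt_mul_isLittleO (hn : 4 ≤ n) (hη : IsReactiveProfile n η)
    (hh : Tendsto (fun z => h z - lam0 n * z ^ (2 - del n)) atTop (𝓝 0)) (hy : y ≠ 0) :
    (fun t => vInf n η μ h (√t * y) t - (mu1 |y| + t ^ (-eps n) * μ |y|))
      =o[atTop] fun t => t ^ (-eps n) := by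
  refine ((hη.rpow_mul_phi1_isLittleO (by lia) hy).add
    (rpow_mul_phi2_isLittleO hn hy hh)).congr' ?_ .rfl
  filter_upwards [eventually_gt_atTop 0] with t ht
  rw [vInf_sqrt_mul ht]
  ring

theorem reaction_front_diffusive_scale_general (hn : 4 ≤ n) (hη : IsReactiveProfile n η)
    (hh : Tendsto (fun z => h z - lam0 n * z ^ (2 - del n)) atTop (𝓝 0)) (hy : y ≠ 0)
    {v : ℝ → ℝ → ℝ}
    (hv : (fun t => v (√t * y) t - vInf n η μ h (√t * y) t) =o[atTop] fun t => t ^ (-eps n)) :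
    Tendsto
      (fun t : ℝ => t ^ ((n : ℝ) * eps n) *
        (1 / 2 * (v (√t * y) t ^ 2 - uu (√t * y) t ^ 2) ^ n))
      atTop (𝓝 (1 / 2 * (2 * mu1 |y| * μ |y|) ^ n)) := by
  have hexpansion : (fun t => v (√t * y) t - (mu1 |y| + t ^ (-eps n) * μ |y|))
      =o[atTop] fun t => t ^ (-eps n) := by
    simpa using hv.add (vInf_sqrt_mul_isLittleO (μ := μ) hn hη hh hy)
  have hlim := (tendsto_rpow_mul_sq_sub_sq_pow (eps_pos (by lia)) hexpansion n).const_mul (1 / 2)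
  refine hlim.congr' ?_
  filter_upwards [eventually_gt_atTop 0] with t ht
  rw [uu_sqrt_mul_sq ht]
  ring

end DiffusiveScale

/-- The reaction front on the diffusive scale: for every y ≠ 0,
t^{nε} F(√t y, t) → (1/2)(2μ₁(|y|)μ₂(|y|))ⁿ as t → ∞,
where F(x,t) = (1/2)(v(x,t)² − u(x,t)²)ⁿ. -/
theorem reaction_front_diffusive_scale (n : ℕ) (hn : 4 ≤ n) (η μ h : ℝ → ℝ)
    (hη : IsReactiveProfile n η) (hμ : IsDiffusiveProfile n μ) (hh : IsCorrector n η h)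
    (τ C : ℝ) (hτ : 0 < τ) (hC : 0 < C) (v : ℝ → ℝ → ℝ)
    (hv : ∀ x : ℝ, ∀ t ≥ τ, |v x t - vInf n η μ h x t| ≤ C * t ^ (-(4 * gam n)))
    (y : ℝ) (hy : y ≠ 0) :
    Filter.Tendsto
      (fun t : ℝ => t ^ ((n : ℝ) * eps n) *
        ((1 : ℝ) / 2 * (v (Real.sqrt t * y) t ^ 2 - uu (Real.sqrt t * y) t ^ 2) ^ n))
      Filter.atTop
      (nhds ((1 : ℝ) / 2 * (2 * mu1 |y| * μ |y|) ^ n)) := by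
  have hγε : -(4 * gam n) < -eps n := by linarith [eps_le_three_mul_gam hn, gam_pos n]
  have herror : (fun t => v (√t * y) t - vInf n η μ h (√t * y) t)
      =O[atTop] fun t => t ^ (-(4 * gam n)) := by
    refine .of_bound C ?_
    filter_upwards [eventually_ge_atTop τ, eventually_ge_atTop 0] with t ht ht0
    rw [Real.norm_eq_abs, Real.norm_of_nonneg (by positivity)]
    exact hv (√t * y) t ht
  exact reaction_front_diffusive_scale_general hn hη hh.2.2.2 hy
    (herror.trans_isLittleO (isLittleO_rpow_rpow_atTop hγε))
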